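/- arXiv:1302.4072 — 3 statements merged into one kernel-verified Lean document; each statement's English description precedes it below -/
import Mathlib

section
/- Let Y = [y_1, ..., y_n] ∈ ℝ^{m×n} be a matrix of rank d ≤ min{m,n}, and let Y = Ψ Σ Vᵀ be a singular value decomposition of Y, with Ψ ∈ ℝ^{m×m} and V ∈ ℝ^{n×n} orthogonal and Σ diagonal with diagonal entries σ_1 ≥ σ_2 ≥ ... ≥ 0. Then for every ℓ ∈ {1, ..., d}, the first ℓ columns ψ_1, ..., ψ_ℓ of Ψ form an orthonormal family in ℝ^m that minimizes the functional J(φ_1, ..., φ_ℓ) = Σ_{j=1}^n ‖y_j − Σ_{i=1}^ℓ ⟨y_j, φ_i⟩ φ_i‖² over all orthonormal families {φ_i}_{i=1}^ℓ ⊂ ℝ^m; i.e., for every orthonormal family φ_1, ..., φ_ℓ in ℝ^m, J(ψ_1, ..., ψ_ℓ) ≤ J(φ_1, ..., φ_ℓ). -/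
open Matrix Finset

/-!
For an orthonormal family `φ`, Pythagoras gives
`‖y − ∑ ⟨y, φ_i⟩ φ_i‖² = ‖y‖² − ∑ ⟨y, φ_i⟩²` (`residual_sq`), so minimizing `J` amounts to
maximizing the captured energy `∑_i ∑_j ⟨y_j, φ_i⟩²`. The singular value decomposition yields
`Y Yᵀ = Ψ diag(τ) Ψᵀ` with `τ_r = σ_r²` for `r < n` and `τ_r = 0` otherwise, hence the energy is
`∑_r τ_r w_r` with `w_r = ∑_i ⟨φ_i, ψ_r⟩²` (`energy_eq`). Bessel's inequality gives `0 ≤ w_r ≤ 1`,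
and Parseval's identity gives `∑_r w_r = ℓ`. As `τ` is nonincreasing, such a weighted sum is at most
`∑_{r < ℓ} τ_r` (`weighted_sum_le`), and this value is attained by `φ = (ψ_1, ..., ψ_ℓ)`.
-/

/-- Pythagoras for the projection onto the span of an orthonormal family. -/
lemma residual_sq {m ℓ : ℕ} (φ : Fin ℓ → Fin m → ℝ)
    (hφ : ∀ i i' : Fin ℓ, (∑ k : Fin m, φ i k * φ i' k) = if i = i' then 1 else 0)
    (y : Fin m → ℝ) :
    ∑ k, (y k - ∑ i, (∑ k', y k' * φ i k') * φ i k) ^ 2 =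
      ∑ k, y k ^ 2 - ∑ i, (∑ k, y k * φ i k) ^ 2 := by
  set c : Fin ℓ → ℝ := fun i => ∑ k, y k * φ i k with hc
  have h1 : ∑ k, y k * ∑ i, c i * φ i k = ∑ i, c i ^ 2 := by
    simp_rw [Finset.mul_sum]
    rw [Finset.sum_comm]
    refine Finset.sum_congr rfl fun i _ => ?_
    rw [sq]
    nth_rewrite 3 [hc]
    rw [Finset.mul_sum]
    exact Finset.sum_congr rfl fun k _ => by ring
  have h2 : ∑ k, (∑ i, c i * φ i k) ^ 2 = ∑ i, c i ^ 2 := by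
    simp_rw [sq, Finset.sum_mul_sum]
    rw [Finset.sum_comm]
    refine Finset.sum_congr rfl fun i _ => ?_
    rw [Finset.sum_comm]
    have : ∀ i', ∑ k, c i * φ i k * (c i' * φ i' k) = c i * c i' * if i = i' then 1 else 0 := by
      intro i'
      rw [← hφ, Finset.mul_sum]
      exact Finset.sum_congr rfl fun k _ => by ring
    simp [this]
  have h3 : ∀ k, (y k - ∑ i, c i * φ i k) ^ 2 =
      y k ^ 2 - 2 * (y k * ∑ i, c i * φ i k) + (∑ i, c i * φ i k) ^ 2 := fun k => by ring
  change ∑ k, (y k - ∑ i, c i * φ i k) ^ 2 = ∑ k, y k ^ 2 - ∑ i, c i ^ 2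
  simp_rw [h3]
  rw [Finset.sum_add_distrib, Finset.sum_sub_distrib, ← Finset.mul_sum, h1, h2]
  ring

/-- A sum of nonincreasing values with weights in `[0, 1]` of total mass `ℓ` is largest when the
mass sits on the first `ℓ` indices. -/
lemma weighted_sum_le {m ℓ : ℕ} (hℓ : ℓ ≤ m) (τ : ℕ → ℝ) (hτ : Antitone τ) (w : Fin m → ℝ)
    (hw0 : ∀ r, 0 ≤ w r) (hw1 : ∀ r, w r ≤ 1) (hw : ∑ r, w r = ℓ) :
    ∑ r : Fin m, τ r * w r ≤ ∑ i : Fin ℓ, τ i := by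
  have hsum : ∀ f : ℕ → ℝ, ∑ r : Fin m, f r * (if (r : ℕ) < ℓ then 1 else 0) = ∑ i : Fin ℓ, f i := by
    intro f
    rw [Fin.sum_univ_eq_sum_range (fun r => f r * (if r < ℓ then 1 else 0)) m,
      Fin.sum_univ_eq_sum_range f ℓ, ← Finset.sum_subset (Finset.range_mono hℓ)]
    · exact Finset.sum_congr rfl fun r hr => by simp [Finset.mem_range.1 hr]
    · intro r _ hr
      simp at hr
      simp [hr]
  have hone := hsum fun _ => 1
  simp only [one_mul, Finset.sum_const, Finset.card_univ, Fintype.card_fin, nsmul_eq_mul,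
    mul_one] at hone
  -- Both weights have mass `ℓ`, so `τ` may be shifted by the threshold `τ ℓ`;
  -- every term is then nonpositive.
  have key : ∑ r : Fin m, (τ r - τ ℓ) * (w r - if (r : ℕ) < ℓ then 1 else 0) ≤ 0 := by
    refine Finset.sum_nonpos fun r _ => ?_
    split_ifs with h
    · exact mul_nonpos_of_nonneg_of_nonpos (sub_nonneg.2 (hτ h.le)) (sub_nonpos.2 (hw1 r))
    · exact mul_nonpos_of_nonpos_of_nonneg (sub_nonpos.2 (hτ (not_lt.1 h))) (by simpa using hw0 r)
  have hexp : ∑ r : Fin m, (τ r - τ ℓ) * (w r - if (r : ℕ) < ℓ then 1 else 0) =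
      (∑ r : Fin m, τ r * w r - ∑ r : Fin m, τ r * (if (r : ℕ) < ℓ then 1 else 0))
        - τ ℓ * (∑ r, w r - ∑ r : Fin m, if (r : ℕ) < ℓ then 1 else 0) := by
    rw [← Finset.sum_sub_distrib, ← Finset.sum_sub_distrib, Finset.mul_sum,
      ← Finset.sum_sub_distrib]
    exact Finset.sum_congr rfl fun r _ => by ring
  rw [hexp, hsum, hw, hone] at key
  linarith

/-- The energy `∑_j ⟨y_j, x⟩² = xᵀ Y Yᵀ x` in the coordinates of `x` with respect to the left
singular vectors. The eigenvalue of `Y Yᵀ` is `0` beyond the `n`-th index, whatever `σ` is there. -/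
lemma energy_eq {m n : ℕ} (Ψ : Matrix (Fin m) (Fin m) ℝ) (V : Matrix (Fin n) (Fin n) ℝ)
    (S : Matrix (Fin m) (Fin n) ℝ) (σ : ℕ → ℝ) (hV : Vᵀ * V = 1)
    (hSdiag : ∀ (i : Fin m) (j : Fin n), S i j = if (i : ℕ) = (j : ℕ) then σ i else 0)
    (x : Fin m → ℝ) :
    ∑ j, (∑ k, (Ψ * S * Vᵀ) k j * x k) ^ 2 =
      ∑ r : Fin m, (if (r : ℕ) < n then σ r ^ 2 else 0) * (∑ k, x k * Ψ k r) ^ 2 := by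
  have hSS : S * Sᵀ = diagonal fun r : Fin m => if (r : ℕ) < n then σ r ^ 2 else 0 := by
    ext r r'
    rw [Matrix.mul_apply, diagonal_apply]
    simp only [transpose_apply, hSdiag]
    by_cases hr : (r : ℕ) < n
    · rw [Finset.sum_eq_single (⟨r, hr⟩ : Fin n)]
      · by_cases h : r = r'
        · subst h; simp [hr, sq]
        · have : ¬ (r' : ℕ) = r := fun h' => h (Fin.ext h'.symm)
          simp [h, this]
      · intro j _ hj
        have : ¬ (r : ℕ) = j := fun h' => hj (Fin.ext h'.symm)
        simp [this]
      · simp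
    · rw [Finset.sum_eq_zero]
      · simp [hr]
      · intro j _
        have : ¬ (r : ℕ) = j := fun h' => hr (h' ▸ j.2)
        simp [this]
  have hYY : (Ψ * S * Vᵀ) * (Ψ * S * Vᵀ)ᵀ =
      Ψ * (diagonal fun r : Fin m => if (r : ℕ) < n then σ r ^ 2 else 0) * Ψᵀ := by
    rw [← hSS]
    simp only [transpose_mul, transpose_transpose, Matrix.mul_assoc]
    rw [← Matrix.mul_assoc Vᵀ V, hV, Matrix.one_mul]
  calc ∑ j, (∑ k, (Ψ * S * Vᵀ) k j * x k) ^ 2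
      = (x ᵥ* (Ψ * S * Vᵀ)) ⬝ᵥ (x ᵥ* (Ψ * S * Vᵀ)) := by
        simp only [dotProduct, vecMul, sq, mul_comm]
    _ = (x ᵥ* ((Ψ * S * Vᵀ) * (Ψ * S * Vᵀ)ᵀ)) ⬝ᵥ x := by
        generalize Ψ * S * Vᵀ = M
        rw [← vecMul_vecMul, ← dotProduct_mulVec _ Mᵀ, mulVec_transpose]
    _ = (x ᵥ* Ψ ᵥ* diagonal fun r : Fin m => if (r : ℕ) < n then σ r ^ 2 else 0) ⬝ᵥ (x ᵥ* Ψ) := by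
        rw [hYY, ← vecMul_vecMul, ← dotProduct_mulVec, mulVec_transpose, vecMul_vecMul]
    _ = _ := by
        simp only [dotProduct, vecMul_diagonal]
        refine Finset.sum_congr rfl fun r _ => ?_
        simp only [vecMul, dotProduct]
        ring

/-- **POD basis optimality (Theorem 2.1).**
Let `Y = [y_1, ..., y_n] ∈ ℝ^{m×n}` have rank `d ≤ min m n`, and let `Y = Ψ S Vᵀ` be a
singular value decomposition of `Y` (with `Ψ`, `V` orthogonal and `S` diagonal with
nonnegative, nonincreasing diagonal entries `σ`).  Then for every `ℓ ∈ {1, ..., d}`,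
the first `ℓ` columns `ψ_1, ..., ψ_ℓ` of `Ψ` form an orthonormal family in `ℝ^m`
minimizing the POD projection-error functional
`J(φ_1, ..., φ_ℓ) = ∑_j ‖y_j − ∑_i ⟨y_j, φ_i⟩ φ_i‖²`
over all orthonormal families `φ_1, ..., φ_ℓ` in `ℝ^m`. -/
theorem pod_basis_optimality
    {m n d : ℕ} (Y : Matrix (Fin m) (Fin n) ℝ)
    (Ψ : Matrix (Fin m) (Fin m) ℝ) (V : Matrix (Fin n) (Fin n) ℝ)
    (S : Matrix (Fin m) (Fin n) ℝ) (σ : ℕ → ℝ)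
    (hrank : Y.rank = d) (hd : d ≤ min m n)
    (hΨ : Ψᵀ * Ψ = 1) (hV : Vᵀ * V = 1)
    (hSdiag : ∀ (i : Fin m) (j : Fin n), S i j = if (i : ℕ) = (j : ℕ) then σ i else 0)
    (hσnonneg : ∀ k, 0 ≤ σ k)
    (hσmono : ∀ k l : ℕ, k ≤ l → σ l ≤ σ k)
    (hSVD : Y = Ψ * S * Vᵀ)
    (ℓ : ℕ) (hℓ1 : 1 ≤ ℓ) (hℓd : ℓ ≤ d) :
    -- `ψ i` is the `i`-th column of `Ψ`, `i = 0, ..., ℓ-1`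
    let ψ : Fin ℓ → Fin m → ℝ :=
      fun i k => Ψ k (Fin.castLE (hℓd.trans (hd.trans (min_le_left m n))) i)
    -- the `ψ i` form an orthonormal family in `ℝ^m` ...
    (∀ i i' : Fin ℓ, (∑ k : Fin m, ψ i k * ψ i' k) = if i = i' then 1 else 0) ∧
    -- ... and they minimize `J` over all orthonormal families of `ℓ` vectors
    (∀ φ : Fin ℓ → Fin m → ℝ,
      (∀ i i' : Fin ℓ, (∑ k : Fin m, φ i k * φ i' k) = if i = i' then 1 else 0) →
      (∑ j : Fin n, ∑ k : Fin m,
          (Y k j - ∑ i : Fin ℓ, (∑ k' : Fin m, Y k' j * ψ i k') * ψ i k) ^ 2) ≤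
      (∑ j : Fin n, ∑ k : Fin m,
          (Y k j - ∑ i : Fin ℓ, (∑ k' : Fin m, Y k' j * φ i k') * φ i k) ^ 2)) := by
  intro ψ
  have hℓm : ℓ ≤ m := hℓd.trans (hd.trans (min_le_left m n))
  have hcol : ∀ r r' : Fin m, ∑ k, Ψ k r * Ψ k r' = if r = r' then 1 else 0 := by
    intro r r'
    have := congrFun (congrFun hΨ r) r'
    simpa [Matrix.mul_apply, Matrix.one_apply] using this
  have hψ : ∀ i i' : Fin ℓ, (∑ k : Fin m, ψ i k * ψ i' k) = if i = i' then 1 else 0 := by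
    intro i i'
    simp only [ψ, hcol, (Fin.castLE_injective hℓm).eq_iff]
  refine ⟨hψ, fun φ hφ => ?_⟩
  set τ : ℕ → ℝ := fun r => if r < n then σ r ^ 2 else 0 with hτdef
  have hτ : Antitone τ := by
    intro a b hab
    simp only [hτdef]
    split_ifs with h1 h2 h2
    · exact pow_le_pow_left₀ (hσnonneg b) (hσmono a b hab) 2
    · omega
    · positivity
    · exact le_rfl
  have hE : ∀ x : Fin m → ℝ, ∑ j, (∑ k, Y k j * x k) ^ 2 =
      ∑ r : Fin m, τ r * (∑ k, x k * Ψ k r) ^ 2 := by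
    intro x
    rw [hSVD]
    exact energy_eq Ψ V S σ hV hSdiag x
  have hJ : ∀ χ : Fin ℓ → Fin m → ℝ,
      (∀ i i' : Fin ℓ, (∑ k : Fin m, χ i k * χ i' k) = if i = i' then 1 else 0) →
      ∑ j : Fin n, ∑ k : Fin m,
          (Y k j - ∑ i : Fin ℓ, (∑ k' : Fin m, Y k' j * χ i k') * χ i k) ^ 2 =
        ∑ j, ∑ k, Y k j ^ 2 - ∑ i, ∑ r : Fin m, τ r * (∑ k, χ i k * Ψ k r) ^ 2 := by
    intro χ hχ
    simp_rw [← hE]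
    rw [Finset.sum_comm (s := (univ : Finset (Fin ℓ))), ← Finset.sum_sub_distrib]
    exact Finset.sum_congr rfl fun j _ => residual_sq χ hχ fun k => Y k j
  rw [hJ ψ hψ, hJ φ hφ]
  have hEψ : ∑ i, ∑ r : Fin m, τ r * (∑ k, ψ i k * Ψ k r) ^ 2 = ∑ i : Fin ℓ, τ i := by
    refine Finset.sum_congr rfl fun i _ => ?_
    simp [ψ, hcol]
  have hEφ : ∑ i, ∑ r : Fin m, τ r * (∑ k, φ i k * Ψ k r) ^ 2 ≤ ∑ i : Fin ℓ, τ i := by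
    rw [Finset.sum_comm]
    simp_rw [← Finset.mul_sum]
    refine weighted_sum_le hℓm τ hτ _ (fun r => Finset.sum_nonneg fun i _ => sq_nonneg _) ?_ ?_
    · -- Bessel's inequality for the unit vector `Ψ · r` and the family `φ`.
      intro r
      have h := residual_sq φ hφ fun k => Ψ k r
      have h0 : 0 ≤ ∑ k, (Ψ k r - ∑ i, (∑ k', Ψ k' r * φ i k') * φ i k) ^ 2 :=
        Finset.sum_nonneg fun k _ => sq_nonneg _
      have h1 : ∑ k, Ψ k r ^ 2 = 1 := by simpa [sq] using hcol r r
      rw [h, h1] at h0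
      simp_rw [mul_comm (φ _ _)]
      linarith
    · -- Parseval's identity for each `φ i` in the orthonormal basis of columns of `Ψ`.
      rw [Finset.sum_comm]
      have hP : ∀ i, ∑ r, (∑ k, φ i k * Ψ k r) ^ 2 = 1 := by
        intro i
        have hΨ' : Ψ * Ψᵀ = 1 := mul_eq_one_comm.1 hΨ
        calc ∑ r, (∑ k, φ i k * Ψ k r) ^ 2 = (φ i ᵥ* Ψ) ⬝ᵥ (φ i ᵥ* Ψ) := by
              simp only [dotProduct, vecMul, sq]
          _ = φ i ⬝ᵥ φ i := by
              rw [← mulVec_transpose Ψ, dotProduct_mulVec, mulVec_transpose, vecMul_vecMul,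
                hΨ', vecMul_one]
          _ = 1 := by simpa [dotProduct] using hφ i i
      simp [hP]
  rw [hEψ]
  linarith
end

section
/- Let Y = [y_1, ..., y_n] ∈ ℝ^{m×n} have rank d ≤ min{m,n}, with singular value decomposition Y = Ψ Σ Vᵀ and singular values σ_1 ≥ σ_2 ≥ ... ≥ σ_d > 0, and let ψ_1, ..., ψ_ℓ be the first ℓ ≤ d columns of Ψ. Then the value of the POD projection-error functional at the leading left singular vectors equals the sum of the squares of the discarded singular values: J(ψ_1, ..., ψ_ℓ) = Σ_{j=1}^n ‖y_j − Σ_{i=1}^ℓ ⟨y_j, ψ_i⟩ ψ_i‖² = Σ_{i=ℓ+1}^d σ_i². -/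
open Matrix Finset

/-!
The orthogonal projection onto the first `ℓ` left singular vectors is `Ψ D Ψᵀ`, where `D` is the
diagonal `0`-`1` matrix selecting the first `ℓ` coordinates.  The residual of `Y = Ψ S Vᵀ` is
therefore `Ψ T Vᵀ`, where `T` is `S` with its first `ℓ` rows set to zero.  The POD functional is the
squared Frobenius norm of this residual, and by orthogonal invariance (`frob_orthogonal`) it equals
that of `T`, namely the sum of `σ i ^ 2` over `ℓ ≤ i < min m n`.  The terms with `d ≤ i` vanish
because `Y` has rank `d` (`sigma_eq_zero`).
-/

theorem frob_eq_trace {m n : ℕ} (A : Matrix (Fin m) (Fin n) ℝ) :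
    ∑ j, ∑ k, A k j ^ 2 = (Aᵀ * A).trace := by
  simp [Matrix.trace, Matrix.mul_apply, pow_two]

/-- The squared Frobenius norm is invariant under left and right orthogonal multiplication. -/
theorem frob_orthogonal {m n : ℕ} (Ψ : Matrix (Fin m) (Fin m) ℝ) (V : Matrix (Fin n) (Fin n) ℝ)
    (T : Matrix (Fin m) (Fin n) ℝ) (hΨ : Ψᵀ * Ψ = 1) (hV : Vᵀ * V = 1) :
    ∑ j, ∑ k, (Ψ * (T * Vᵀ)) k j ^ 2 = ∑ j, ∑ k, T k j ^ 2 := by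
  rw [frob_eq_trace, frob_eq_trace]
  have h : (Ψ * (T * Vᵀ))ᵀ * (Ψ * (T * Vᵀ)) = V * (Tᵀ * T * Vᵀ) := by
    calc (Ψ * (T * Vᵀ))ᵀ * (Ψ * (T * Vᵀ)) = V * (Tᵀ * (Ψᵀ * Ψ) * T * Vᵀ) := by
          simp only [Matrix.transpose_mul, Matrix.transpose_transpose, Matrix.mul_assoc]
      _ = _ := by rw [hΨ, Matrix.mul_one]
  rw [h, Matrix.trace_mul_comm, Matrix.mul_assoc, hV, Matrix.mul_one]

theorem sum_castLE {ℓ m : ℕ} (h : ℓ ≤ m) (f : Fin m → ℝ) :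
    ∑ i : Fin ℓ, f (Fin.castLE h i) = ∑ i : Fin m, if (i : ℕ) < ℓ then f i else 0 := by
  obtain ⟨r, rfl⟩ := Nat.exists_eq_add_of_le h
  rw [Fin.sum_univ_add]
  simp
  rfl

/-- A rectangular diagonal matrix of rank at most `d` with nonincreasing nonnegative diagonal
has no nonzero diagonal entry from position `d` on: otherwise its leading square block of size
`d + 1` would be invertible. -/
theorem sigma_eq_zero {m n d : ℕ} (S : Matrix (Fin m) (Fin n) ℝ) (σ : ℕ → ℝ) (hr : S.rank ≤ d)
    (hS : ∀ (i : Fin m) (j : Fin n), S i j = if (i : ℕ) = (j : ℕ) then σ i else 0)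
    (hσnonneg : ∀ k, 0 ≤ σ k) (hσmono : ∀ k l : ℕ, k ≤ l → σ l ≤ σ k)
    (k : ℕ) (hdk : d ≤ k) (hkm : k < m) (hkn : k < n) : σ k = 0 := by
  by_contra hne
  have hpos : 0 < σ k := lt_of_le_of_ne (hσnonneg k) (Ne.symm hne)
  let f : Fin (d + 1) → Fin m := Fin.castLE (by omega)
  let g : Fin (d + 1) → Fin n := Fin.castLE (by omega)
  have hdiag : S.submatrix f g = Matrix.diagonal (fun i : Fin (d + 1) => σ i) := by
    ext i j
    simp [f, g, hS, Matrix.diagonal_apply, Fin.ext_iff]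
  -- A submatrix is obtained by multiplying with submatrices of the identity on both sides.
  have hfac : S.submatrix f g = (1 : Matrix (Fin m) (Fin m) ℝ).submatrix f id * S *
      (1 : Matrix (Fin n) (Fin n) ℝ).submatrix id g := by
    ext i j
    simp [Matrix.mul_apply, Matrix.one_apply]
  have hle : (S.submatrix f g).rank ≤ S.rank := by
    rw [hfac]
    exact (Matrix.rank_mul_le_left _ _).trans (Matrix.rank_mul_le_right _ _)
  have hfull : (S.submatrix f g).rank = d + 1 := by
    have hu : IsUnit (S.submatrix f g) := by
      rw [hdiag, Matrix.isUnit_iff_isUnit_det, Matrix.det_diagonal, isUnit_iff_ne_zero]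
      exact Finset.prod_ne_zero_iff.mpr fun i _ =>
        (hpos.trans_le (hσmono i k (by omega))).ne'
    rw [Matrix.rank_of_isUnit _ hu, Fintype.card_fin]
  omega

/-- **Value of the POD functional at the leading left singular vectors.**
Let `Y = [y_1, ..., y_n] ∈ ℝ^{m×n}` have rank `d ≤ min m n`, with singular value
decomposition `Y = Ψ S Vᵀ` and singular values `σ 0 ≥ σ 1 ≥ ... ≥ σ (d-1) > 0`,
and let `ψ_1, ..., ψ_ℓ` be the first `ℓ ≤ d` columns of `Ψ`.  Then the POD
projection-error functional at the leading left singular vectors equals the sum of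
the squares of the discarded singular values:
`J(ψ_1, ..., ψ_ℓ) = ∑_j ‖y_j − ∑_i ⟨y_j, ψ_i⟩ ψ_i‖² = ∑_{i=ℓ+1}^{d} σ_i²`
(with `0`-based indexing the right-hand side is `∑_{i ∈ [ℓ, d)} σ i ^ 2`). -/
theorem pod_functional_value_at_singular_vectors
    {m n d : ℕ} (Y : Matrix (Fin m) (Fin n) ℝ)
    (Ψ : Matrix (Fin m) (Fin m) ℝ) (V : Matrix (Fin n) (Fin n) ℝ)
    (S : Matrix (Fin m) (Fin n) ℝ) (σ : ℕ → ℝ)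
    (hrank : Y.rank = d) (hd : d ≤ min m n)
    (hΨ : Ψᵀ * Ψ = 1) (hV : Vᵀ * V = 1)
    (hSdiag : ∀ (i : Fin m) (j : Fin n), S i j = if (i : ℕ) = (j : ℕ) then σ i else 0)
    (hσnonneg : ∀ k, 0 ≤ σ k)
    (hσmono : ∀ k l : ℕ, k ≤ l → σ l ≤ σ k)
    (hσpos : ∀ k, k < d → 0 < σ k)
    (hSVD : Y = Ψ * S * Vᵀ)
    (ℓ : ℕ) (hℓ1 : 1 ≤ ℓ) (hℓd : ℓ ≤ d) :
    -- `ψ i` is the `i`-th column of `Ψ`, `i = 0, ..., ℓ-1`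
    let ψ : Fin ℓ → Fin m → ℝ :=
      fun i k => Ψ k (Fin.castLE (hℓd.trans (hd.trans (min_le_left m n))) i)
    (∑ j : Fin n, ∑ k : Fin m,
        (Y k j - ∑ i : Fin ℓ, (∑ k' : Fin m, Y k' j * ψ i k') * ψ i k) ^ 2) =
      ∑ i ∈ Finset.Ico ℓ d, σ i ^ 2 := by
  intro ψ
  have hℓm : ℓ ≤ m := hℓd.trans (hd.trans (min_le_left m n))
  let T : Matrix (Fin m) (Fin n) ℝ := Matrix.of fun i j => if (i : ℕ) < ℓ then 0 else S i j
  have hY : Y = Ψ * (S * Vᵀ) := by rw [hSVD, Matrix.mul_assoc]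
  have hcoef : Ψᵀ * Y = S * Vᵀ := by rw [hY, ← Matrix.mul_assoc, hΨ, Matrix.one_mul]
  have hres : ∀ (k : Fin m) (j : Fin n),
      Y k j - ∑ i : Fin ℓ, (∑ k' : Fin m, Y k' j * ψ i k') * ψ i k = (Ψ * (T * Vᵀ)) k j := by
    intro k j
    have h1 : ∑ i : Fin ℓ, (∑ k' : Fin m, Y k' j * ψ i k') * ψ i k =
        ∑ i : Fin m, if (i : ℕ) < ℓ then (S * Vᵀ) i j * Ψ k i else 0 := by
      rw [← sum_castLE hℓm (fun i => (S * Vᵀ) i j * Ψ k i), ← hcoef]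
      simp [ψ, Matrix.mul_apply, mul_comm]
    have h2 : ∀ i : Fin m, (T * Vᵀ) i j = if (i : ℕ) < ℓ then 0 else (S * Vᵀ) i j := by
      intro i
      split_ifs with hi <;> simp [T, Matrix.mul_apply, hi]
    rw [h1, hY, Matrix.mul_apply, Matrix.mul_apply, ← Finset.sum_sub_distrib]
    refine Finset.sum_congr rfl fun i _ => ?_
    rw [h2]
    split_ifs <;> ring
  simp only [hres]
  rw [frob_orthogonal Ψ V T hΨ hV, Finset.sum_comm]
  have hSrank : S.rank ≤ d := by
    have hS : S = Ψᵀ * Y * V := by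
      rw [hcoef, Matrix.mul_assoc, hV, Matrix.mul_one]
    rw [hS, ← hrank]
    exact (Matrix.rank_mul_le_left _ _).trans (Matrix.rank_mul_le_right _ _)
  have hrow : ∀ i : Fin m, ∑ j : Fin n, T i j ^ 2 =
      if (i : ℕ) ∈ Finset.Ico ℓ d then σ i ^ 2 else 0 := by
    intro i
    by_cases hi : (i : ℕ) < ℓ
    · simp [T, hi, Nat.not_le.mpr hi]
    · by_cases hin : (i : ℕ) < n
      · have hs : ∑ j : Fin n, T i j ^ 2 = σ i ^ 2 := by
          rw [Finset.sum_eq_single (⟨i, hin⟩ : Fin n)]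
          · simp [T, hi, hSdiag]
          · intro j _ hj
            have : (i : ℕ) ≠ j := fun h => hj (Fin.ext h.symm)
            simp [T, hSdiag, this]
          · simp
        rw [hs]
        by_cases hid : (i : ℕ) < d
        · simp [hid, Nat.not_lt.mp hi]
        · have := sigma_eq_zero S σ hSrank hSdiag hσnonneg hσmono i (Nat.not_lt.mp hid) i.2 hin
          simp [this]
      · have hid : ¬ (i : ℕ) < d := fun h => hin (h.trans_le (hd.trans (min_le_right m n)))
        simp only [Finset.mem_Ico, hid, and_false, if_false]
        refine Finset.sum_eq_zero fun j _ => ?_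
        have : (i : ℕ) ≠ j := fun h => hin (h ▸ j.2)
        simp [T, hSdiag, this]
  simp only [hrow]
  rw [Fin.sum_univ_eq_sum_range (fun i => if i ∈ Finset.Ico ℓ d then σ i ^ 2 else 0) m,
    Finset.sum_ite_mem]
  congr 1
  refine Finset.inter_eq_right.mpr fun i hi => ?_
  rw [Finset.mem_Ico] at hi
  exact Finset.mem_range.mpr (hi.2.trans_le (hd.trans (min_le_left m n)))
end

section
/- Let Y = [y_1, ..., y_n] ∈ ℝ^{m×n} have rank d ≤ min{m,n} and singular values σ_1 ≥ σ_2 ≥ ... ≥ σ_d > 0, and let ℓ ∈ {1, ..., d}. Then for every orthonormal family φ_1, ..., φ_ℓ in ℝ^m one has the lower bound J(φ_1, ..., φ_ℓ) = Σ_{j=1}^n ‖y_j − Σ_{i=1}^ℓ ⟨y_j, φ_i⟩ φ_i‖² ≥ Σ_{i=ℓ+1}^d σ_i². -/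
/-!
The error `J(φ)` equals `‖Y‖_F² - ‖F Y‖_F²`, where the rows of `F` are the `φ_i`. Inserting
`Y = Ψ S Vᵀ` and writing `C = F Ψ` (still with orthonormal rows), this becomes
`∑_k σ_k² (1 - w_k)`, where the weights `w_k = ∑_i C_{ik}²` are the diagonal entries of the
orthogonal projection `Cᵀ C`. Hence `0 ≤ w_k ≤ 1` and `∑_k w_k = ℓ`
(`col_sq_le_one`, `sum_col_sq`). Since `σ_k²` is nonincreasing in `k`, such a weighted sum is
smallest when the weight sits on the first `ℓ` indices (`tail_sum_le`), which leaves
`∑_{k ≥ ℓ} σ_k²`.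
-/

open Matrix Finset

/-- The diagonal entries of the projection `P = Cᵀ C` are at most `1`, because
`P k k = ∑ j, P k j ^ 2 ≥ P k k ^ 2`. -/
lemma col_sq_le_one {ℓ m : ℕ} (C : Matrix (Fin ℓ) (Fin m) ℝ) (hC : C * Cᵀ = 1) (k : Fin m) :
    ∑ i, C i k ^ 2 ≤ 1 := by
  have hP : (Cᵀ * C) * (Cᵀ * C)ᵀ = Cᵀ * C := by
    rw [Matrix.transpose_mul, Matrix.transpose_transpose, Matrix.mul_assoc,
      ← Matrix.mul_assoc C, hC, Matrix.one_mul]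
  have hkk : (Cᵀ * C) k k = ∑ i, C i k ^ 2 := by
    simp [Matrix.mul_apply, sq]
  have h1 : ∑ j, (Cᵀ * C) k j ^ 2 = (Cᵀ * C) k k := by
    conv_rhs => rw [← hP]
    rw [Matrix.mul_apply]
    simp [sq, Matrix.transpose_apply]
  have h2 : (Cᵀ * C) k k ^ 2 ≤ ∑ j, (Cᵀ * C) k j ^ 2 :=
    Finset.single_le_sum (f := fun j => (Cᵀ * C) k j ^ 2) (fun j _ => sq_nonneg _)
      (Finset.mem_univ k)
  rw [h1] at h2
  rw [← hkk]
  nlinarith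

lemma sum_col_sq {ℓ m : ℕ} (C : Matrix (Fin ℓ) (Fin m) ℝ) (hC : C * Cᵀ = 1) :
    ∑ k, ∑ i, C i k ^ 2 = ℓ := by
  have h : (C * Cᵀ).trace = ℓ := by rw [hC]; simp
  rw [← h, Finset.sum_comm]
  simp [Matrix.trace, Matrix.mul_apply, sq]

/-- Among weights `w k ∈ [0, 1]` of total mass `ℓ`, the sum `∑ k, a k * (1 - w k)` of a
nonincreasing `a` is smallest for the indicator of `k < ℓ`. -/
lemma tail_sum_le {m ℓ : ℕ} (hℓm : ℓ ≤ m) (a : ℕ → ℝ)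
    (ha : ∀ k l, k ≤ l → a l ≤ a k) (w : Fin m → ℝ) (hw0 : ∀ k, 0 ≤ w k)
    (hw1 : ∀ k, w k ≤ 1) (hw : ∑ k, w k = ℓ) :
    ∑ k ∈ Finset.Ico ℓ m, a k ≤ ∑ k : Fin m, a k * (1 - w k) := by
  have e1 : ∑ k ∈ Finset.Ico ℓ m, a k = ∑ k : Fin m, if (k : ℕ) < ℓ then 0 else a k := by
    rw [Fin.sum_univ_eq_sum_range (fun k => if k < ℓ then 0 else a k) m,
      ← Finset.sum_range_add_sum_Ico _ hℓm,
      Finset.sum_eq_zero (s := Finset.range ℓ), zero_add]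
    · refine Finset.sum_congr rfl fun k hk => ?_
      rw [if_neg (by simp at hk; omega)]
    · intro k hk
      rw [if_pos (by simpa using hk)]
  have e2 : ∑ k : Fin m, (if (k : ℕ) < ℓ then (1 : ℝ) else 0) = ℓ := by
    rw [Fin.sum_univ_eq_sum_range (fun k => if k < ℓ then (1 : ℝ) else 0) m,
      ← Finset.sum_range_add_sum_Ico _ hℓm, Finset.sum_congr rfl (g := fun _ => (1 : ℝ)),
      Finset.sum_eq_zero (s := Finset.Ico ℓ m)]
    · simp
    · intro k hk
      rw [if_neg (by simp at hk; omega)]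
    · intro k hk
      rw [if_pos (by simpa using hk)]
  -- The threshold `a ℓ` separates the two blocks; its total contribution vanishes.
  have key : ∑ k : Fin m, a ℓ * ((if (k : ℕ) < ℓ then (1 : ℝ) else 0) - w k) ≤
      ∑ k : Fin m, (a k * (1 - w k) - if (k : ℕ) < ℓ then 0 else a k) := by
    refine Finset.sum_le_sum fun k _ => ?_
    split_ifs with h
    · nlinarith [ha k ℓ h.le, hw1 k]
    · nlinarith [ha ℓ k (not_lt.mp h), hw0 k]
  rw [← Finset.mul_sum, Finset.sum_sub_distrib, Finset.sum_sub_distrib, e2, hw, ← e1] at key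
  linarith

lemma sum_sq_eq_trace {m n : ℕ} (A : Matrix (Fin m) (Fin n) ℝ) :
    ∑ j, ∑ k, A k j ^ 2 = (A * Aᵀ).trace := by
  rw [Finset.sum_comm]
  simp [Matrix.trace, Matrix.mul_apply, sq]

/-- Pythagoras for the projection `Fᵀ F`, in Frobenius norm. -/
lemma trace_residual {ℓ m n : ℕ} (Y : Matrix (Fin m) (Fin n) ℝ)
    (F : Matrix (Fin ℓ) (Fin m) ℝ) (hF : F * Fᵀ = 1) :
    ((Y - Fᵀ * (F * Y)) * (Y - Fᵀ * (F * Y))ᵀ).trace =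
      (Y * Yᵀ).trace - (F * (Y * Yᵀ) * Fᵀ).trace := by
  have h1 : (Fᵀ * (F * Y) * Yᵀ).trace = (F * (Y * Yᵀ) * Fᵀ).trace := by
    rw [Matrix.mul_assoc, Matrix.trace_mul_comm, Matrix.mul_assoc F Y Yᵀ]
  have h2 : (Y * (Fᵀ * (F * Y))ᵀ).trace = (F * (Y * Yᵀ) * Fᵀ).trace := by
    rw [← h1, ← Matrix.trace_transpose, Matrix.transpose_mul, Matrix.transpose_transpose]
  have h3 : (Fᵀ * (F * Y) * (Fᵀ * (F * Y))ᵀ).trace = (F * (Y * Yᵀ) * Fᵀ).trace := by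
    have : Fᵀ * (F * Y) * (Fᵀ * (F * Y))ᵀ = Fᵀ * (F * (Y * Yᵀ) * Fᵀ * F) := by
      simp only [Matrix.transpose_mul, Matrix.transpose_transpose, Matrix.mul_assoc]
    rw [this, Matrix.trace_mul_comm, Matrix.mul_assoc, hF, Matrix.mul_one]
  rw [Matrix.transpose_sub, Matrix.sub_mul, Matrix.mul_sub, Matrix.mul_sub]
  simp only [Matrix.trace_sub, h1, h2, h3]
  ring

/-- **Lower bound for the POD functional.**
Let `Y = [y_1, ..., y_n] ∈ ℝ^{m×n}` have rank `d ≤ min m n` and singular values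
`σ 0 ≥ σ 1 ≥ ... ≥ σ (d-1) > 0` (all other singular values being zero; the singular
values are encoded through a singular value decomposition `Y = Ψ S Vᵀ`), and let
`ℓ ∈ {1, ..., d}`.  Then for every orthonormal family `φ_1, ..., φ_ℓ` in `ℝ^m` one
has the lower bound
`J(φ_1, ..., φ_ℓ) = ∑_j ‖y_j − ∑_i ⟨y_j, φ_i⟩ φ_i‖² ≥ ∑_{i=ℓ+1}^{d} σ_i²`
(with `0`-based indexing the right-hand side is `∑_{i ∈ [ℓ, d)} σ i ^ 2`). -/
theorem pod_functional_lower_bound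
    {m n d : ℕ} (Y : Matrix (Fin m) (Fin n) ℝ)
    (Ψ : Matrix (Fin m) (Fin m) ℝ) (V : Matrix (Fin n) (Fin n) ℝ)
    (S : Matrix (Fin m) (Fin n) ℝ) (σ : ℕ → ℝ)
    (hrank : Y.rank = d) (hd : d ≤ min m n)
    (hΨ : Ψᵀ * Ψ = 1) (hV : Vᵀ * V = 1)
    (hSdiag : ∀ (i : Fin m) (j : Fin n), S i j = if (i : ℕ) = (j : ℕ) then σ i else 0)
    (hσmono : ∀ k l : ℕ, k ≤ l → σ l ≤ σ k)
    (hσpos : ∀ k, k < d → 0 < σ k)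
    (hσzero : ∀ k, d ≤ k → σ k = 0)
    (hSVD : Y = Ψ * S * Vᵀ)
    (ℓ : ℕ) (hℓ1 : 1 ≤ ℓ) (hℓd : ℓ ≤ d)
    (φ : Fin ℓ → Fin m → ℝ)
    (hφ : ∀ i i' : Fin ℓ, (∑ k : Fin m, φ i k * φ i' k) = if i = i' then 1 else 0) :
    ∑ i ∈ Finset.Ico ℓ d, σ i ^ 2 ≤
      ∑ j : Fin n, ∑ k : Fin m,
        (Y k j - ∑ i : Fin ℓ, (∑ k' : Fin m, Y k' j * φ i k') * φ i k) ^ 2 := by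
  have hdm : d ≤ m := hd.trans (min_le_left _ _)
  have hdn : d ≤ n := hd.trans (min_le_right _ _)
  let F : Matrix (Fin ℓ) (Fin m) ℝ := Matrix.of φ
  have hF : F * Fᵀ = 1 := by
    ext i i'
    simpa [F, Matrix.mul_apply, Matrix.one_apply] using hφ i i'
  let C : Matrix (Fin ℓ) (Fin m) ℝ := F * Ψ
  have hΨ' : Ψ * Ψᵀ = 1 := mul_eq_one_comm.mp hΨ
  have hC : C * Cᵀ = 1 := by
    simp only [C, Matrix.transpose_mul]
    rw [Matrix.mul_assoc, ← Matrix.mul_assoc Ψ, hΨ', Matrix.one_mul, hF]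
  -- For `k ≥ n` row `k` of `S` is zero, which is consistent with `σ k = 0` because `d ≤ n`.
  have hSS : S * Sᵀ = Matrix.diagonal fun k : Fin m => σ k ^ 2 := by
    ext k k'
    rw [Matrix.mul_apply, Matrix.diagonal_apply]
    simp only [Matrix.transpose_apply, hSdiag]
    by_cases hk : (k : ℕ) < n
    · rw [Finset.sum_eq_single (⟨k, hk⟩ : Fin n)]
      · by_cases h : k = k'
        · subst h; simp [sq]
        · have h' : (k' : ℕ) ≠ k := fun e => h (Fin.ext e.symm)
          simp [h, h']
      · intro j _ hj
        have : (k : ℕ) ≠ j := fun e => hj (Fin.ext e.symm)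
        simp [this]
      · simp
    · rw [hσzero k (by omega), Finset.sum_eq_zero]
      · simp
      · intro j _
        have : (k : ℕ) ≠ j := by omega
        simp [this]
  have hYY : Y * Yᵀ = Ψ * (S * Sᵀ) * Ψᵀ := by
    rw [hSVD]
    simp only [Matrix.transpose_mul, Matrix.transpose_transpose, Matrix.mul_assoc]
    rw [← Matrix.mul_assoc Vᵀ, hV, Matrix.one_mul]
  have ht1 : (Y * Yᵀ).trace = ∑ k : Fin m, σ k ^ 2 := by
    rw [hYY, Matrix.trace_mul_comm, ← Matrix.mul_assoc, hΨ, Matrix.one_mul, hSS,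
      Matrix.trace_diagonal]
  have ht2 : (F * (Y * Yᵀ) * Fᵀ).trace = ∑ k : Fin m, σ k ^ 2 * ∑ i, C i k ^ 2 := by
    have : F * (Y * Yᵀ) * Fᵀ = C * (S * Sᵀ) * Cᵀ := by
      rw [hYY]
      simp only [C, Matrix.transpose_mul, Matrix.mul_assoc]
    rw [this, hSS]
    clear_value C
    simp only [Matrix.trace, Matrix.diag_apply, Matrix.mul_apply (N := Cᵀ), Matrix.mul_diagonal,
      Matrix.transpose_apply, Finset.mul_sum]
    rw [Finset.sum_comm]
    exact Finset.sum_congr rfl fun k _ => Finset.sum_congr rfl fun i _ => by ring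
  have hJ : ∑ j : Fin n, ∑ k : Fin m,
      (Y k j - ∑ i : Fin ℓ, (∑ k' : Fin m, Y k' j * φ i k') * φ i k) ^ 2 =
      ∑ k : Fin m, σ k ^ 2 * (1 - ∑ i, C i k ^ 2) := by
    have e : ∑ k : Fin m, σ k ^ 2 * (1 - ∑ i, C i k ^ 2) =
        ((Y - Fᵀ * (F * Y)) * (Y - Fᵀ * (F * Y))ᵀ).trace := by
      rw [trace_residual Y F hF, ht1, ht2, ← Finset.sum_sub_distrib]
      exact Finset.sum_congr rfl fun k _ => by ring
    rw [e, ← sum_sq_eq_trace]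
    refine Finset.sum_congr rfl fun j _ => Finset.sum_congr rfl fun k _ => ?_
    simp only [Matrix.sub_apply, Matrix.mul_apply, Matrix.transpose_apply, F, Matrix.of_apply]
    congr 2
    refine Finset.sum_congr rfl fun i _ => ?_
    rw [mul_comm]
    congr 1
    exact Finset.sum_congr rfl fun k' _ => mul_comm _ _
  have hσ0 : ∀ k, 0 ≤ σ k := fun k =>
    (lt_or_ge k d).elim (fun h => (hσpos k h).le) fun h => (hσzero k h).ge
  rw [hJ]
  calc ∑ i ∈ Finset.Ico ℓ d, σ i ^ 2 ≤ ∑ i ∈ Finset.Ico ℓ m, σ i ^ 2 :=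
        Finset.sum_le_sum_of_subset_of_nonneg (Finset.Ico_subset_Ico_right hdm)
          fun i _ _ => sq_nonneg _
    _ ≤ _ := tail_sum_le (hℓd.trans hdm) (fun k => σ k ^ 2)
        (fun k l h => pow_le_pow_left₀ (hσ0 l) (hσmono k l h) 2) _
        (fun k => Finset.sum_nonneg fun i _ => sq_nonneg _) (col_sq_le_one C hC)
        (sum_col_sq C hC)
end
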